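/- arXiv:1404.1761 — 2 statements merged into one kernel-verified Lean document; each statement's English description precedes it below -/
import Mathlib

section
/- Almost surely under P⁰, the conditional expectation of Z(t) given 𝒢 equals E⁰[Z(t) | 𝒢] = Σ_{j=1}^m p_j · L(t;μ_j) · ∫₀ᵗ (L(s;μ₀)/L(s;μ_j)) λ e^{−λs} ds + e^{−λt} L(t;μ₀). -/
/-!
The conditional expectation is computed by the freezing lemma: if `X` is independent of `𝒢` and
`f (ω, x)` is jointly measurable for `𝒢 ⊗ σ(x)`, then `E[f (·, X) | 𝒢] (ω)` is the integral of
`f (ω, ·)` against the law of `X`. This is `condExp_eq_integral_map_of_indepFun`, obtained from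
the fact that the conditional distribution of `X` given an independent variable is the law of `X`.

Here `X = (ρ, U)`, and path continuity of `L` upgrades `𝒢`-measurability at each fixed time to
joint measurability with respect to `𝒢`. The law of `(ρ, U)` is the product of the exponential
distribution of rate `λ` (`map_eq_expMeasure`, by comparing distribution functions) and the law of
`U`. For a frozen `ω` the integrand is a finite sum of products of a function of `r` and a function
of `u`, so its integral splits into the stated terms (`integral_frozen`). The ratios of `L` are
continuous in `r`, hence bounded on `[0, t]`, so that this splitting is legitimate for every `ω`.
-/

open MeasureTheory ProbabilityTheory Real Set

/-- Freezing lemma: a variable `X` independent of `Y` may be integrated out against its law while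
`Y` is kept fixed. -/
lemma condExp_eq_integral_map_of_indepFun {Ω β E : Type*} {mΩ : MeasurableSpace Ω}
    {mβ : MeasurableSpace β} [MeasurableSpace E] [StandardBorelSpace E] [Nonempty E]
    (P : Measure Ω) [IsProbabilityMeasure P] (Y : Ω → β) (X : Ω → E)
    (hY : Measurable Y) (hX : Measurable X) (hind : IndepFun Y X P)
    (f : β × E → ℝ) (hf : Measurable f) (hint : Integrable (fun ω => f (Y ω, X ω)) P) :
    P[fun ω => f (Y ω, X ω) | mβ.comap Y] =ᵐ[P] fun ω => ∫ x, f (Y ω, x) ∂(P.map X) := by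
  have hprob : IsProbabilityMeasure (P.map X) := Measure.isProbabilityMeasure_map hX.aemeasurable
  have hlaw := condDistrib_ae_eq_of_measure_eq_compProd_of_measurable (μ := P) hY hX
    (κ := Kernel.const β (P.map X)) (by
      rw [Measure.compProd_const]
      exact (indepFun_iff_map_prod_eq_prod_map_map hY.aemeasurable hX.aemeasurable).1 hind)
  refine (condExp_prod_ae_eq_integral_condDistrib hY hX.aemeasurable
    hf.stronglyMeasurable hint).trans ?_
  filter_upwards [ae_of_ae_map hY.aemeasurable hlaw] with ω hω
  rw [hω, Kernel.const_apply]

/-- The case `Y = id` with the target carrying the sub-`σ`-algebra `𝒢`. -/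
lemma condExp_eq_integral_map_of_indep {Ω E : Type*} {𝒢 : MeasurableSpace Ω}
    {mΩ : MeasurableSpace Ω} [MeasurableSpace E] [StandardBorelSpace E] [Nonempty E]
    (P : Measure Ω) [IsProbabilityMeasure P]
    (h𝒢 : 𝒢 ≤ mΩ) (X : Ω → E) (hX : Measurable X)
    (hind : Indep (MeasurableSpace.comap X inferInstance) 𝒢 P)
    (f : Ω × E → ℝ) (hf : Measurable[𝒢.prod inferInstance] f)
    (hint : Integrable (fun ω => f (ω, X ω)) P) :
    P[fun ω => f (ω, X ω) | 𝒢] =ᵐ[P] fun ω => ∫ x, f (ω, x) ∂(P.map X) := by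
  have hid : Measurable[mΩ, 𝒢] (id : Ω → Ω) := measurable_id'' h𝒢
  have hI : @IndepFun Ω Ω E mΩ 𝒢 _ id X P := by
    refine (@IndepFun_iff_Indep Ω Ω E mΩ 𝒢 _ id X P).2 ?_
    rw [MeasurableSpace.comap_id]
    exact hind.symm
  have h := @condExp_eq_integral_map_of_indepFun Ω Ω E mΩ 𝒢 _ _ _ P _ id X hid hX hI f hf hint
  rwa [MeasurableSpace.comap_id] at h

lemma map_eq_expMeasure {Ω : Type*} {mΩ : MeasurableSpace Ω} (P : Measure Ω)
    [IsProbabilityMeasure P] (lam : ℝ) (hlam : 0 < lam)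
    (ρ : Ω → ℝ) (hρ : Measurable ρ) (hρ_nonneg : ∀ ω, 0 ≤ ρ ω)
    (hprior : ∀ t : ℝ, 0 ≤ t → P {ω | t < ρ ω} = ENNReal.ofReal (exp (-lam * t))) :
    P.map ρ = expMeasure lam := by
  have := Measure.isProbabilityMeasure_map (μ := P) hρ.aemeasurable
  have := isProbabilityMeasure_expMeasure hlam
  apply Measure.eq_of_cdf
  ext x
  rw [cdf_expMeasure_eq hlam, cdf_eq_real]
  split_ifs with hx
  · have h : (P.map ρ).real (Ioi x) = exp (-lam * x) := by
      rw [map_measureReal_apply hρ measurableSet_Ioi, measureReal_def]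
      change (P {ω | x < ρ ω}).toReal = _
      rw [hprior x hx, ENNReal.toReal_ofReal (exp_nonneg _)]
    have h2 := probReal_compl_eq_one_sub (μ := P.map ρ) (measurableSet_Ioi (a := x))
    rw [compl_Ioi] at h2
    rw [h2, h, neg_mul]
  · rw [map_measureReal_apply hρ measurableSet_Iic]
    have : ρ ⁻¹' Iic x = ∅ := by
      ext ω
      simp only [mem_preimage, mem_Iic, mem_empty_iff_false, iff_false, not_le]
      exact lt_of_lt_of_le (not_le.1 hx) (hρ_nonneg ω)
    simp [this]

lemma expMeasure_absolutelyContinuous (lam : ℝ) : expMeasure lam ≪ volume :=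
  withDensity_absolutelyContinuous _ _

lemma ae_nonneg_expMeasure (lam : ℝ) : ∀ᵐ r ∂expMeasure lam, 0 ≤ r := by
  rw [ae_iff]
  simp only [not_le]
  change expMeasure lam (Iio 0) = 0
  rw [expMeasure, gammaMeasure, withDensity_apply _ measurableSet_Iio]
  exact lintegral_exponentialPDF_of_nonpos le_rfl

lemma integrableOn_Iio_expMeasure {lam : ℝ} (hlam : 0 < lam) (t : ℝ) {g : ℝ → ℝ}
    (hg : Continuous g) : IntegrableOn g (Iio t) (expMeasure lam) := by
  have := isProbabilityMeasure_expMeasure hlam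
  have h : IntegrableOn g (Icc 0 t) (expMeasure lam) :=
    hg.continuousOn.integrableOn_compact isCompact_Icc
  refine h.mono_set_ae ?_
  filter_upwards [ae_nonneg_expMeasure lam] with r hr hrt
  exact ⟨hr, le_of_lt hrt⟩

lemma setIntegral_Iio_expMeasure {lam : ℝ} (hlam : 0 < lam) {t : ℝ} (ht : 0 ≤ t) (g : ℝ → ℝ) :
    ∫ r in Iio t, g r ∂(expMeasure lam) = ∫ s in (0 : ℝ)..t, g s * (lam * exp (-lam * s)) := by
  have hset : Iio t =ᵐ[expMeasure lam] Ioc 0 t := by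
    have h0 : ∀ᵐ r ∂expMeasure lam, r ≠ 0 :=
      (expMeasure_absolutelyContinuous lam).ae_le (Measure.ae_ne volume 0)
    have h1 : ∀ᵐ r ∂expMeasure lam, r ≠ t :=
      (expMeasure_absolutelyContinuous lam).ae_le (Measure.ae_ne volume t)
    filter_upwards [ae_nonneg_expMeasure lam, h0, h1] with r hr hr0 hrt
    apply propext
    change r < t ↔ 0 < r ∧ r ≤ t
    exact ⟨fun h => ⟨lt_of_le_of_ne hr hr0.symm, h.le⟩, fun h => lt_of_le_of_ne h.2 hrt⟩
  rw [setIntegral_congr_set hset, intervalIntegral.integral_of_le ht, expMeasure, gammaMeasure,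
    setIntegral_withDensity_eq_setIntegral_toReal_smul (f := gammaPDF 1 lam)
      (measurable_gammaPDFReal 1 lam).ennreal_ofReal (by simp [gammaPDF]) _ measurableSet_Ioc]
  refine setIntegral_congr_fun measurableSet_Ioc fun s hs => ?_
  have h : gammaPDF 1 lam s = ENNReal.ofReal (lam * exp (-(lam * s))) :=
    exponentialPDF_of_nonneg hs.1.le
  have hpos : 0 ≤ lam * exp (-(lam * s)) := by positivity
  simp only [h, ENNReal.toReal_ofReal hpos, smul_eq_mul, neg_mul]
  ring

lemma expMeasure_real_Ici {lam : ℝ} (hlam : 0 < lam) {t : ℝ} (ht : 0 ≤ t) :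
    (expMeasure lam).real (Ici t) = exp (-lam * t) := by
  have := isProbabilityMeasure_expMeasure hlam
  have hset : Ici t =ᵐ[expMeasure lam] Ioi t :=
    (expMeasure_absolutelyContinuous lam).ae_le Ioi_ae_eq_Ici.symm
  rw [measureReal_congr hset, ← compl_Iic, probReal_compl_eq_one_sub measurableSet_Iic,
    ← cdf_eq_real, cdf_expMeasure_eq hlam, if_pos ht]
  simp

/-- The integral of the frozen integrand against the law of `(ρ, U)`: `a`, `c j` stand for the
paths of `L (·; μ₀)` and `L (·; μ j)`, and `b j`, `d` for the values of `L (·; μ j)` and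
`L (·; μ₀)` at time `t`. The points `μ j` need not be distinct, since each term of the sum is
integrated separately. -/
lemma integral_frozen {lam : ℝ} (hlam : 0 < lam) {t : ℝ} (ht : 0 ≤ t) (υ : Measure ℝ)
    [IsProbabilityMeasure υ] {m : ℕ} (μ p : Fin m → ℝ) (hυ : ∀ j, υ.real {μ j} = p j)
    (a : ℝ → ℝ) (c : Fin m → ℝ → ℝ) (b : Fin m → ℝ) (d : ℝ)
    (ha : Continuous a) (hc : ∀ j, Continuous (c j)) (hc0 : ∀ j s, c j s ≠ 0) :
    ∫ q : ℝ × ℝ, (if q.1 < t then a q.1 * ∑ j, (if q.2 = μ j then b j / c j q.1 else 0) else d)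
      ∂((expMeasure lam).prod υ)
    = (∑ j, p j * b j * ∫ s in (0 : ℝ)..t, (a s / c j s) * (lam * exp (-lam * s)))
      + exp (-lam * t) * d := by
  have := isProbabilityMeasure_expMeasure hlam
  have hF : (fun q : ℝ × ℝ =>
      (if q.1 < t then a q.1 * ∑ j, (if q.2 = μ j then b j / c j q.1 else 0) else d))
      = fun q => (∑ j, (Iio t).indicator (fun r => b j * (a r / c j r)) q.1
          * ({μ j} : Set ℝ).indicator (fun _ => (1 : ℝ)) q.2)
        + (Ici t).indicator (fun _ => d) q.1 * (1 : ℝ) := by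
    funext q
    by_cases h : q.1 < t
    · have h' : ¬ t ≤ q.1 := not_le.2 h
      simp only [h, if_true, indicator, mem_Iio, mem_Ici, h', if_false, mem_singleton_iff,
        Finset.mul_sum, mul_one, add_zero]
      refine Finset.sum_congr rfl fun j _ => ?_
      split_ifs <;> ring
    · simp [h, indicator, not_lt.1 h]
  have hint1 : ∀ j, Integrable (fun q : ℝ × ℝ =>
      (Iio t).indicator (fun r => b j * (a r / c j r)) q.1
          * ({μ j} : Set ℝ).indicator (fun _ => (1 : ℝ)) q.2) ((expMeasure lam).prod υ) := by
    intro j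
    refine Integrable.mul_prod (f := (Iio t).indicator (fun r => b j * (a r / c j r)))
      (g := ({μ j} : Set ℝ).indicator (fun _ => (1 : ℝ))) ?_ ?_
    · rw [integrable_indicator_iff measurableSet_Iio]
      exact integrableOn_Iio_expMeasure hlam t
        (continuous_const.mul (ha.div (hc j) (hc0 j)))
    · exact (integrable_const _).indicator (measurableSet_singleton _)
  have hint2 : Integrable (fun q : ℝ × ℝ => (Ici t).indicator (fun _ => d) q.1 * (1 : ℝ))
      ((expMeasure lam).prod υ) :=
    Integrable.mul_prod (f := (Ici t).indicator (fun _ => d)) (g := fun _ => (1 : ℝ))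
      ((integrable_const _).indicator measurableSet_Ici) (integrable_const _)
  rw [hF, integral_add (integrable_finsetSum _ fun j _ => hint1 j) hint2,
    integral_finsetSum _ fun j _ => hint1 j]
  congr 1
  · refine Finset.sum_congr rfl fun j _ => ?_
    rw [integral_prod_mul ((Iio t).indicator (fun r => b j * (a r / c j r)))
      (({μ j} : Set ℝ).indicator (fun _ => (1 : ℝ))), integral_indicator measurableSet_Iio,
      integral_const_mul, setIntegral_Iio_expMeasure hlam ht,
      integral_indicator (measurableSet_singleton _)]
    simp only [integral_const, measureReal_restrict_apply_univ, hυ j, smul_eq_mul]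
    ring
  · rw [integral_prod_mul ((Ici t).indicator (fun _ => d)) (fun _ => (1 : ℝ)),
      integral_indicator measurableSet_Ici]
    simp [expMeasure_real_Ici hlam ht]

lemma measurable_frozen {Ω : Type*} [MeasurableSpace Ω] {m : ℕ} (μ₀ : ℝ) (μ : Fin m → ℝ)
    (L : ℝ → ℝ → Ω → ℝ) (hL_cont : ∀ u : ℝ, ∀ ω : Ω, Continuous (fun t => L t u ω))
    (hL_meas : ∀ t u : ℝ, Measurable (fun ω => L t u ω)) (t : ℝ) :
    Measurable (fun q : Ω × (ℝ × ℝ) =>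
      if q.2.1 < t then
        L q.2.1 μ₀ q.1 * ∑ j, (if q.2.2 = μ j then L t (μ j) q.1 / L q.2.1 (μ j) q.1 else 0)
      else L t μ₀ q.1) := by
  have hr : Measurable (fun q : Ω × (ℝ × ℝ) => q.2.1) := by fun_prop
  have hu : Measurable (fun q : Ω × (ℝ × ℝ) => q.2.2) := by fun_prop
  have hLr : ∀ v, Measurable (fun q : Ω × (ℝ × ℝ) => L q.2.1 v q.1) := by
    intro v
    have h := measurable_uncurry_of_continuous_of_measurable (u := fun s ω => L s v ω)
      (hL_cont v) (fun s => hL_meas s v)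
    exact h.comp (hr.prodMk measurable_fst)
  have hLt : ∀ v, Measurable (fun q : Ω × (ℝ × ℝ) => L t v q.1) :=
    fun v => (hL_meas t v).comp measurable_fst
  refine Measurable.ite (measurableSet_lt hr measurable_const) ?_ (hLt μ₀)
  refine (hLr μ₀).mul (Finset.measurable_fun_sum _ fun j _ => ?_)
  exact Measurable.ite (hu (measurableSet_singleton (μ j))) ((hLt _).div (hLr _))
    measurable_const

/-- The conditional expectation of `Z (t)` in closed form. The binder `𝒢` precedes `mΩ` so that
`mΩ` is the instance found by typeclass search. -/
lemma condExp_frozen {Ω : Type*} {𝒢 : MeasurableSpace Ω} {mΩ : MeasurableSpace Ω}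
    (P0 : Measure Ω) [IsProbabilityMeasure P0] (lam : ℝ) (hlam : 0 < lam)
    (m : ℕ) (μ₀ : ℝ) (μ : Fin m → ℝ)
    (ρ : Ω → ℝ) (hρ_meas : Measurable ρ) (hρ_nonneg : ∀ ω, 0 ≤ ρ ω)
    (hρ_prior : ∀ t : ℝ, 0 ≤ t → P0 {ω | t < ρ ω} = ENNReal.ofReal (exp (-lam * t)))
    (U : Ω → ℝ) (hU_meas : Measurable U)
    (p : Fin m → ℝ) (hp_nonneg : ∀ j, 0 ≤ p j)
    (hU_prior : ∀ j : Fin m, P0 {ω | U ω = μ j} = ENNReal.ofReal (p j))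
    (h𝒢 : 𝒢 ≤ mΩ) (hρU_indep : IndepFun ρ U P0)
    (hindep : Indep (MeasurableSpace.comap (fun ω => (ρ ω, U ω)) inferInstance) 𝒢 P0)
    (L : ℝ → ℝ → Ω → ℝ)
    (hL_cont : ∀ u : ℝ, ∀ ω : Ω, Continuous (fun t => L t u ω))
    (hL_pos : ∀ t u : ℝ, ∀ ω : Ω, 0 < L t u ω)
    (hL_G_meas : ∀ t u : ℝ, Measurable[𝒢] (fun ω => L t u ω))
    (t : ℝ) (ht : 0 ≤ t) (Zt : Ω → ℝ)
    (hZt : ∀ ω, Zt ω =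
      if ρ ω < t then
        L (ρ ω) μ₀ ω * ∑ j, (if U ω = μ j then L t (μ j) ω / L (ρ ω) (μ j) ω else 0)
      else L t μ₀ ω)
    (hZt_int : Integrable Zt P0) :
    P0[Zt | 𝒢] =ᵐ[P0] fun ω =>
      (∑ j, p j * L t (μ j) ω *
          ∫ s in (0 : ℝ)..t, (L s μ₀ ω / L s (μ j) ω) * (lam * exp (-lam * s)))
        + exp (-lam * t) * L t μ₀ ω := by
  have hmap : P0.map (fun ω => (ρ ω, U ω)) = (expMeasure lam).prod (P0.map U) := by
    rw [← map_eq_expMeasure P0 lam hlam ρ hρ_meas hρ_nonneg hρ_prior]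
    exact (indepFun_iff_map_prod_eq_prod_map_map hρ_meas.aemeasurable hU_meas.aemeasurable).1
      hρU_indep
  have := Measure.isProbabilityMeasure_map (μ := P0) hU_meas.aemeasurable
  have hυ : ∀ j, (P0.map U).real {μ j} = p j := by
    intro j
    rw [map_measureReal_apply hU_meas (measurableSet_singleton _), measureReal_def]
    change (P0 {ω | U ω = μ j}).toReal = _
    rw [hU_prior j, ENNReal.toReal_ofReal (hp_nonneg j)]
  let f : Ω × (ℝ × ℝ) → ℝ := fun q =>
    if q.2.1 < t then
      L q.2.1 μ₀ q.1 * ∑ j, (if q.2.2 = μ j then L t (μ j) q.1 / L q.2.1 (μ j) q.1 else 0)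
    else L t μ₀ q.1
  have hf : Measurable[𝒢.prod inferInstance] f :=
    @measurable_frozen Ω 𝒢 m μ₀ μ L hL_cont hL_G_meas t
  have hZ : Zt = fun ω => f (ω, (ρ ω, U ω)) := funext hZt
  have key := condExp_eq_integral_map_of_indep P0 h𝒢 (fun ω => (ρ ω, U ω))
    (hρ_meas.prodMk hU_meas) hindep f hf (hZ ▸ hZt_int)
  rw [hZ]
  refine key.trans (Filter.Eventually.of_forall fun ω => ?_)
  change ∫ x, f (ω, x) ∂(P0.map (fun ω => (ρ ω, U ω))) = _
  rw [hmap]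
  exact integral_frozen hlam ht (P0.map U) μ p hυ (fun s => L s μ₀ ω) (fun j s => L s (μ j) ω)
    (fun j => L t (μ j) ω) (L t μ₀ ω) (hL_cont μ₀ ω) (fun j => hL_cont (μ j) ω)
    (fun j s => (hL_pos s (μ j) ω).ne')

/-- Formula (3.2) of the paper: the posterior expectation of the Radon–Nikodym
derivative `Z(t)` given the observation σ-algebra `𝒢`. -/
theorem posterior_expectation_formula
    {Ω : Type*} {mΩ : MeasurableSpace Ω} (P0 : Measure Ω) [IsProbabilityMeasure P0]
    (T lam : ℝ) (hT : 0 < T) (hlam : 0 < lam)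
    (m : ℕ) (hm : 0 < m) (μ₀ : ℝ) (μ : Fin m → ℝ)
    (ρ : Ω → ℝ) (hρ_meas : Measurable ρ) (hρ_nonneg : ∀ ω, 0 ≤ ρ ω)
    (hρ_prior : ∀ t : ℝ, 0 ≤ t → P0 {ω | t < ρ ω} = ENNReal.ofReal (exp (-lam * t)))
    (U : Ω → ℝ) (hU_meas : Measurable U) (hU_range : ∀ ω, ∃ j : Fin m, U ω = μ j)
    (p : Fin m → ℝ) (hp_nonneg : ∀ j, 0 ≤ p j) (hp_sum : ∑ j, p j = 1)
    (hU_prior : ∀ j : Fin m, P0 {ω | U ω = μ j} = ENNReal.ofReal (p j))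
    (𝒢 : MeasurableSpace Ω) (h𝒢 : 𝒢 ≤ mΩ)
    (hρU_indep : IndepFun ρ U P0)
    (hindep : Indep (MeasurableSpace.comap (fun ω => (ρ ω, U ω)) inferInstance) 𝒢 P0)
    (L : ℝ → ℝ → Ω → ℝ)
    (hL_meas : ∀ u : ℝ, Measurable (fun q : ℝ × Ω => L q.1 u q.2))
    (hL_cont : ∀ u : ℝ, ∀ ω : Ω, Continuous (fun t => L t u ω))
    (hL_pos : ∀ t u : ℝ, ∀ ω : Ω, 0 < L t u ω)
    (hL_G_meas : ∀ t u : ℝ, Measurable[𝒢] (fun ω => L t u ω))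
    (t : ℝ) (ht : t ∈ Icc (0 : ℝ) T)
    (Zt : Ω → ℝ)
    (hZt : ∀ ω, Zt ω =
      if ρ ω < t then
        L (ρ ω) μ₀ ω * ∑ j, (if U ω = μ j then L t (μ j) ω / L (ρ ω) (μ j) ω else 0)
      else L t μ₀ ω)
    (hZt_int : Integrable Zt P0)
    (hLR_int : ∀ j : Fin m, Integrable
      (fun ω => L t (μ j) ω * ∫ s in (0 : ℝ)..t, (L s μ₀ ω / L s (μ j) ω) * (lam * exp (-lam * s))) P0) :
    P0[Zt | 𝒢] =ᵐ[P0] fun ω =>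
      (∑ j, p j * L t (μ j) ω *
          ∫ s in (0 : ℝ)..t, (L s μ₀ ω / L s (μ j) ω) * (lam * exp (-lam * s)))
        + exp (-lam * t) * L t μ₀ ω := by
  exact condExp_frozen P0 lam hlam m μ₀ μ ρ hρ_meas hρ_nonneg hρ_prior U hU_meas p hp_nonneg
    hU_prior h𝒢 hρU_indep hindep L hL_cont hL_pos hL_G_meas t ht.1 Zt hZt hZt_int
end

section
/- The process N(t) := Σ_{j=1}^m p_j · L_j(t) · R_j(t) + e^{−λt} L₀(t), for t ∈ [0,T], is a martingale with respect to the filtration (𝔉_t)_{t∈[0,T]} under P⁰. -/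
/-!
Since the weights `p j` sum to one, `N = ∑ j, p j * Z j`, where
`Z j t = L j t * R j t + exp (-lam * t) * L0 t`; so it is enough that each `Z j` is a martingale.

Fix `j`, write `a = L0`, `b = L j`, `w s = lam * exp (-lam * s)`, and let `A` be an event known at
time `u ≤ t`. Splitting `R t = R u + ∫ s in u..t, a s / b s * w s` and using Tonelli,
`∫_A b t * R t = ∫_A b t * R u + ∫ s in u..t, w s * (∫_A b t * (a s / b s))`.
The factors `R u` and `a s / b s` are known at times `u` and `s`, so the martingale property of
`b` turns `b t` into `b u` and `b s` respectively; the second integrand becomes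
`w s * ∫_A a s = w s * ∫_A a u` by the martingale property of `a`. As `w` integrates to
`exp (-lam * u) - exp (-lam * t)` over `[u, t]`, this gives `∫_A Z t = ∫_A Z u`.

Every process involved is nonnegative, so the whole computation is carried out with
`[0, ∞]`-valued integrals (`setLIntegral_eq`), and the integrability of `Z t` is then the case
`u = 0`, `A = Ω`. In particular no integrability of `b t * (a s / b s)` has to be known in advance:
pulling out known factors is done for arbitrary nonnegative measurable factors
(`setLIntegral_mul_eq_of_condExp`).
-/

open MeasureTheory ProbabilityTheory Real Set

/-- Pulling out a known factor, without any integrability requirement on it: if `X = E[X' | m]`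
with `X, X' ≥ 0`, then the measures `X • P` and `X' • P` agree on `m`, hence give the same integral
to every `m`-measurable `Y ≥ 0`. -/
lemma setLIntegral_mul_eq_of_condExp {Ω : Type*} {m mΩ : MeasurableSpace Ω} (hm : m ≤ mΩ)
    (P : Measure Ω) [IsProbabilityMeasure P] {X X' : Ω → ℝ}
    (hX : Measurable X) (hX' : Measurable X') (hXi : Integrable X P) (hXi' : Integrable X' P)
    (hX0 : ∀ ω, 0 ≤ X ω) (hX0' : ∀ ω, 0 ≤ X' ω) (h : P[X' | m] =ᵐ[P] X)
    {Y : Ω → ENNReal} (hY : Measurable[m] Y) {A : Set Ω} (hA : MeasurableSet[m] A) :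
    ∫⁻ ω in A, ENNReal.ofReal (X' ω) * Y ω ∂P = ∫⁻ ω in A, ENNReal.ofReal (X ω) * Y ω ∂P := by
  have hmeas : (P.withDensity fun ω => ENNReal.ofReal (X' ω)).trim hm
      = (P.withDensity fun ω => ENNReal.ofReal (X ω)).trim hm := by
    refine @Measure.ext _ m _ _ fun B hB => ?_
    rw [trim_measurableSet_eq hm hB, trim_measurableSet_eq hm hB,
      withDensity_apply _ (hm _ hB), withDensity_apply _ (hm _ hB),
      ← ofReal_integral_eq_lintegral_ofReal hXi'.integrableOn (ae_of_all _ hX0'),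
      ← ofReal_integral_eq_lintegral_ofReal hXi.integrableOn (ae_of_all _ hX0),
      ← setIntegral_condExp hm hXi' hB]
    congr 1
    exact integral_congr_ae (ae_restrict_of_ae h)
  have hYA : Measurable[m] (A.indicator Y) := hY.indicator hA
  have key : ∀ {V : Ω → ℝ}, Measurable V → ∫⁻ ω in A, ENNReal.ofReal (V ω) * Y ω ∂P
      = ∫⁻ ω, A.indicator Y ω ∂((P.withDensity fun ω => ENNReal.ofReal (V ω)).trim hm) := by
    intro V hV
    rw [lintegral_trim hm hYA, lintegral_withDensity_eq_lintegral_mul _ hV.ennreal_ofReal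
      (hYA.mono hm le_rfl), ← lintegral_indicator (hm _ hA)]
    refine lintegral_congr fun ω => ?_
    by_cases hω : ω ∈ A <;> simp [hω]
  rw [key hX', key hX, hmeas]

/-- A time integral over `[0, t]` of a continuous adapted process is known at time `t`. -/
lemma stronglyMeasurable_intervalIntegral {Ω : Type*} {mΩ : MeasurableSpace Ω}
    (ℱ : Filtration ℝ mΩ) {g : ℝ → Ω → ℝ} (hgc : ∀ ω, Continuous fun s => g s ω)
    (hgm : ∀ s, Measurable[ℱ s] (g s)) {t : ℝ} (ht : 0 ≤ t) :
    StronglyMeasurable[ℱ t] fun ω => ∫ s in (0 : ℝ)..t, g s ω := by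
  -- Stopping `g` at time `t` makes it jointly measurable with respect to `ℱ t`.
  have h1 : (fun ω => ∫ s in (0 : ℝ)..t, g s ω)
      = fun ω => ∫ s in Ioc (0 : ℝ) t, g (min s t) ω := by
    ext ω
    rw [intervalIntegral.integral_of_le ht]
    refine setIntegral_congr_fun measurableSet_Ioc fun s hs => ?_
    simp [min_eq_left hs.2]
  rw [h1]
  let _ := ℱ t
  have h2 : StronglyMeasurable (Function.uncurry fun s ω => g (min s t) ω) :=
    stronglyMeasurable_uncurry_of_continuous_of_stronglyMeasurable
      (fun ω => (hgc ω).comp (continuous_id.min continuous_const))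
      (fun s => ((hgm _).mono (ℱ.mono (min_le_right s t)) le_rfl).stronglyMeasurable)
  exact h2.integral_prod_left

section SingleAlternative

variable {Ω : Type*} {mΩ : MeasurableSpace Ω} {P : Measure Ω} [IsProbabilityMeasure P]
  {T lam : ℝ} {ℱ : Filtration ℝ mΩ} {a b : ℝ → Ω → ℝ}

/-- The process `b t * R t + exp (-lam * t) * a t` attached to a single alternative `b`. -/
noncomputable def Z (lam : ℝ) (a b : ℝ → Ω → ℝ) (t : ℝ) (ω : Ω) : ℝ :=
  b t ω * (∫ s in (0 : ℝ)..t, a s ω / b s ω * (lam * exp (-lam * s))) + exp (-lam * t) * a t ω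

lemma continuous_integrand (hb : ∀ t ω, 0 < b t ω)
    (hac : ∀ ω, Continuous fun t => a t ω) (hbc : ∀ ω, Continuous fun t => b t ω) (ω : Ω) :
    Continuous fun s => a s ω / b s ω * (lam * exp (-lam * s)) :=
  ((hac ω).div (hbc ω) fun s => (hb s ω).ne').mul (by fun_prop)

lemma integrand_nonneg (hlam : 0 < lam) (ha : ∀ t ω, 0 < a t ω) (hb : ∀ t ω, 0 < b t ω)
    (s : ℝ) (ω : Ω) : 0 ≤ a s ω / b s ω * (lam * exp (-lam * s)) :=
  mul_nonneg (div_nonneg (ha s ω).le (hb s ω).le) (by positivity)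

lemma Z_nonneg (hlam : 0 < lam) (ha : ∀ t ω, 0 < a t ω) (hb : ∀ t ω, 0 < b t ω)
    {t : ℝ} (ht : 0 ≤ t) (ω : Ω) : 0 ≤ Z lam a b t ω :=
  add_nonneg (mul_nonneg (hb t ω).le
    (intervalIntegral.integral_nonneg ht fun s _ => integrand_nonneg hlam ha hb s ω))
    (mul_nonneg (exp_pos _).le (ha t ω).le)

lemma measurable_integrand (ham : ∀ t, Measurable[ℱ t] (a t)) (hbm : ∀ t, Measurable[ℱ t] (b t))
    (s : ℝ) : Measurable[ℱ s] fun ω => a s ω / b s ω * (lam * exp (-lam * s)) := by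
  let _ := ℱ s
  exact ((ham s).div (hbm s)).mul_const _

lemma stronglyMeasurable_R (hb : ∀ t ω, 0 < b t ω)
    (hac : ∀ ω, Continuous fun t => a t ω) (hbc : ∀ ω, Continuous fun t => b t ω)
    (ham : ∀ t, Measurable[ℱ t] (a t)) (hbm : ∀ t, Measurable[ℱ t] (b t)) {t : ℝ} (ht : 0 ≤ t) :
    StronglyMeasurable[ℱ t]
      fun ω => ∫ s in (0 : ℝ)..t, a s ω / b s ω * (lam * exp (-lam * s)) :=
  stronglyMeasurable_intervalIntegral ℱ (continuous_integrand hb hac hbc)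
    (measurable_integrand ham hbm) ht

lemma stronglyMeasurable_Z (hb : ∀ t ω, 0 < b t ω)
    (hac : ∀ ω, Continuous fun t => a t ω) (hbc : ∀ ω, Continuous fun t => b t ω)
    (ham : ∀ t, Measurable[ℱ t] (a t)) (hbm : ∀ t, Measurable[ℱ t] (b t)) {t : ℝ} (ht : 0 ≤ t) :
    StronglyMeasurable[ℱ t] (Z lam a b t) :=
  ((hbm t).stronglyMeasurable.mul (stronglyMeasurable_R hb hac hbc ham hbm ht)).add
    ((ham t).stronglyMeasurable.const_mul _)

lemma lintegral_expDensity (hlam : 0 < lam) {u t : ℝ} (hut : u ≤ t) :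
    ∫⁻ s in Ioc u t, ENNReal.ofReal (lam * exp (-lam * s))
      = ENNReal.ofReal (exp (-lam * u) - exp (-lam * t)) := by
  have hc : Continuous fun s : ℝ => lam * exp (-lam * s) := by fun_prop
  rw [← ofReal_integral_eq_lintegral_ofReal
    (hc.integrableOn_Icc.mono_set Ioc_subset_Icc_self)
    (ae_of_all _ fun s => by positivity), ← intervalIntegral.integral_of_le hut,
    intervalIntegral.integral_eq_sub_of_hasDerivAt (f := fun s => -exp (-lam * s))
      (fun s _ => ?_) (hc.intervalIntegrable _ _)]
  · congr 1; ring
  · refine (((hasDerivAt_id' s).const_mul (-lam)).exp).fun_neg.congr_deriv ?_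
    ring

/-- The martingale identity for `Z` in `[0, ∞]`-valued form. -/
lemma setLIntegral_eq (hlam : 0 < lam) (ha : ∀ t ω, 0 < a t ω) (hb : ∀ t ω, 0 < b t ω)
    (hac : ∀ ω, Continuous fun t => a t ω) (hbc : ∀ ω, Continuous fun t => b t ω)
    (ham : ∀ t, Measurable[ℱ t] (a t)) (hbm : ∀ t, Measurable[ℱ t] (b t))
    (hai : ∀ t, Integrable (a t) P) (hbi : ∀ t, Integrable (b t) P)
    (haM : ∀ s t : ℝ, 0 ≤ s → s ≤ t → t ≤ T → P[a t | ℱ s] =ᵐ[P] a s)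
    (hbM : ∀ s t : ℝ, 0 ≤ s → s ≤ t → t ≤ T → P[b t | ℱ s] =ᵐ[P] b s)
    {u t : ℝ} (hu : 0 ≤ u) (hut : u ≤ t) (htT : t ≤ T) {A : Set Ω} (hA : MeasurableSet[ℱ u] A) :
    ∫⁻ ω in A, ENNReal.ofReal (Z lam a b t ω) ∂P
      = ∫⁻ ω in A, ENNReal.ofReal (Z lam a b u ω) ∂P := by
  set g : ℝ → Ω → ℝ := fun s ω => a s ω / b s ω * (lam * exp (-lam * s)) with hg
  have hgc : ∀ ω, Continuous fun s => g s ω := continuous_integrand hb hac hbc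
  have hg0 : ∀ s ω, 0 ≤ g s ω := integrand_nonneg hlam ha hb
  have ham' : ∀ t, Measurable (a t) := fun t => (ham t).mono (ℱ.le t) le_rfl
  have hbm' : ∀ t, Measurable (b t) := fun t => (hbm t).mono (ℱ.le t) le_rfl
  have hgm : ∀ s, Measurable[ℱ s] (g s) := measurable_integrand ham hbm
  have hgm' : ∀ s, Measurable (g s) := fun s => (hgm s).mono (ℱ.le s) le_rfl
  set R : ℝ → Ω → ℝ := fun t ω => ∫ s in (0 : ℝ)..t, g s ω with hR
  have hRm : Measurable[ℱ u] fun ω => ENNReal.ofReal (R u ω) :=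
    (stronglyMeasurable_R hb hac hbc ham hbm hu).measurable.ennreal_ofReal
  have hRm' : Measurable fun ω => ENNReal.ofReal (R u ω) := hRm.mono (ℱ.le u) le_rfl
  have hR0 : ∀ t, 0 ≤ t → ∀ ω, 0 ≤ R t ω := fun t ht ω =>
    intervalIntegral.integral_nonneg ht fun s _ => hg0 s ω
  have hZu : ∀ ω, ENNReal.ofReal (Z lam a b u ω) = ENNReal.ofReal (b u ω) * ENNReal.ofReal (R u ω)
      + ENNReal.ofReal (exp (-lam * u)) * ENNReal.ofReal (a u ω) := by
    intro ω
    rw [← ENNReal.ofReal_mul (hb u ω).le, ← ENNReal.ofReal_mul (exp_pos _).le,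
      ← ENNReal.ofReal_add (mul_nonneg (hb u ω).le (hR0 u hu ω))
        (mul_nonneg (exp_pos _).le (ha u ω).le)]
    rfl
  have hZt : ∀ ω, ENNReal.ofReal (Z lam a b t ω) = ENNReal.ofReal (b t ω) * ENNReal.ofReal (R u ω)
      + (ENNReal.ofReal (exp (-lam * t)) * ENNReal.ofReal (a t ω)
        + ∫⁻ s in Ioc u t, ENNReal.ofReal (b t ω) * ENNReal.ofReal (g s ω)) := by
    intro ω
    have hinc : ∫⁻ s in Ioc u t, ENNReal.ofReal (g s ω)
        = ENNReal.ofReal (∫ s in u..t, g s ω) := by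
      rw [intervalIntegral.integral_of_le hut, ofReal_integral_eq_lintegral_ofReal
        ((hgc ω).integrableOn_Icc.mono_set Ioc_subset_Icc_self) (ae_of_all _ fun s => hg0 s ω)]
    have hinc0 : 0 ≤ ∫ s in u..t, g s ω :=
      intervalIntegral.integral_nonneg hut fun s _ => hg0 s ω
    have hsplit : R t ω = R u ω + ∫ s in u..t, g s ω :=
      (intervalIntegral.integral_add_adjacent_intervals ((hgc ω).intervalIntegrable _ _)
        ((hgc ω).intervalIntegrable _ _)).symm
    rw [lintegral_const_mul _ (hgc ω).measurable.ennreal_ofReal, hinc,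
      ← ENNReal.ofReal_mul (hb t ω).le, ← ENNReal.ofReal_mul (hb t ω).le,
      ← ENNReal.ofReal_mul (exp_pos _).le,
      ← ENNReal.ofReal_add (mul_nonneg (exp_pos _).le (ha t ω).le)
        (mul_nonneg (hb t ω).le hinc0),
      ← ENNReal.ofReal_add (mul_nonneg (hb t ω).le (hR0 u hu ω))
        (add_nonneg (mul_nonneg (exp_pos _).le (ha t ω).le) (mul_nonneg (hb t ω).le hinc0))]
    congr 1
    change b t ω * R t ω + exp (-lam * t) * a t ω = _
    rw [hsplit]; ring
  -- The martingale property of `a`, on events known at time `u`.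
  have haA : ∀ s, u ≤ s → s ≤ T →
      ∫⁻ ω in A, ENNReal.ofReal (a s ω) ∂P = ∫⁻ ω in A, ENNReal.ofReal (a u ω) ∂P := by
    intro s hus hsT
    simpa using setLIntegral_mul_eq_of_condExp (ℱ.le u) P (ham' u) (ham' s) (hai u) (hai s)
      (fun ω => (ha u ω).le) (fun ω => (ha s ω).le) (haM u s hu hus hsT)
      (Y := fun _ => 1) measurable_const hA
  have hbR : ∫⁻ ω in A, ENNReal.ofReal (b t ω) * ENNReal.ofReal (R u ω) ∂P
      = ∫⁻ ω in A, ENNReal.ofReal (b u ω) * ENNReal.ofReal (R u ω) ∂P :=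
    setLIntegral_mul_eq_of_condExp (ℱ.le u) P (hbm' u) (hbm' t) (hbi u) (hbi t)
      (fun ω => (hb u ω).le) (fun ω => (hb t ω).le) (hbM u t hu hut htT) hRm hA
  have hbg : ∀ s ∈ Ioc u t, ∫⁻ ω in A, ENNReal.ofReal (b t ω) * ENNReal.ofReal (g s ω) ∂P
      = ENNReal.ofReal (lam * exp (-lam * s)) * ∫⁻ ω in A, ENNReal.ofReal (a u ω) ∂P := by
    intro s hs
    rw [setLIntegral_mul_eq_of_condExp (ℱ.le s) P (hbm' s) (hbm' t) (hbi s) (hbi t)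
      (fun ω => (hb s ω).le) (fun ω => (hb t ω).le) (hbM s t (hu.trans hs.1.le) hs.2 htT)
      (hgm s).ennreal_ofReal (ℱ.mono hs.1.le _ hA), ← haA s hs.1.le (hs.2.trans htT),
      ← lintegral_const_mul _ (ham' s).ennreal_ofReal]
    refine lintegral_congr fun ω => ?_
    rw [← ENNReal.ofReal_mul (hb s ω).le, ← ENNReal.ofReal_mul (by positivity)]
    congr 1
    have := (hb s ω).ne'
    simp only [hg]
    field_simp
  have hjoint : Measurable (Function.uncurry fun (ω : Ω) (s : ℝ) =>
      ENNReal.ofReal (b t ω) * ENNReal.ofReal (g s ω)) := by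
    have h1 : Measurable (Function.uncurry g) :=
      measurable_uncurry_of_continuous_of_measurable hgc hgm'
    exact ((hbm' t).comp measurable_fst).ennreal_ofReal.mul
      (h1.comp measurable_swap).ennreal_ofReal
  have hdouble : ∫⁻ ω in A, (∫⁻ s in Ioc u t,
        ENNReal.ofReal (b t ω) * ENNReal.ofReal (g s ω)) ∂P
      = ENNReal.ofReal (exp (-lam * u) - exp (-lam * t))
        * ∫⁻ ω in A, ENNReal.ofReal (a u ω) ∂P := by
    rw [lintegral_lintegral_swap hjoint.aemeasurable, setLIntegral_congr_fun measurableSet_Ioc hbg,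
      lintegral_mul_const _ (by fun_prop), lintegral_expDensity hlam hut]
  have hbRm : ∀ r, Measurable fun ω => ENNReal.ofReal (b r ω) * ENNReal.ofReal (R u ω) :=
    fun r => (hbm' r).ennreal_ofReal.mul hRm'
  have hcam : Measurable fun ω => ENNReal.ofReal (exp (-lam * t)) * ENNReal.ofReal (a t ω) :=
    (ham' t).ennreal_ofReal.const_mul _
  rw [lintegral_congr hZt, lintegral_congr hZu, lintegral_add_left (hbRm t),
    lintegral_add_left hcam, lintegral_add_left (hbRm u), hbR, hdouble,
    lintegral_const_mul _ (ham' t).ennreal_ofReal, lintegral_const_mul _ (ham' u).ennreal_ofReal,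
    haA t hut htT, ← add_mul, ← ENNReal.ofReal_add (exp_pos _).le]
  · congr 3; ring
  · rw [sub_nonneg, exp_le_exp]
    nlinarith

lemma integrable_Z (hlam : 0 < lam) (ha : ∀ t ω, 0 < a t ω) (hb : ∀ t ω, 0 < b t ω)
    (hac : ∀ ω, Continuous fun t => a t ω) (hbc : ∀ ω, Continuous fun t => b t ω)
    (ham : ∀ t, Measurable[ℱ t] (a t)) (hbm : ∀ t, Measurable[ℱ t] (b t))
    (hai : ∀ t, Integrable (a t) P) (hbi : ∀ t, Integrable (b t) P)
    (haM : ∀ s t : ℝ, 0 ≤ s → s ≤ t → t ≤ T → P[a t | ℱ s] =ᵐ[P] a s)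
    (hbM : ∀ s t : ℝ, 0 ≤ s → s ≤ t → t ≤ T → P[b t | ℱ s] =ᵐ[P] b s)
    {t : ℝ} (ht : 0 ≤ t) (htT : t ≤ T) : Integrable (Z lam a b t) P := by
  have hm : StronglyMeasurable (Z lam a b t) :=
    (stronglyMeasurable_Z hb hac hbc ham hbm ht).mono (ℱ.le t)
  refine ⟨hm.aestronglyMeasurable, ?_⟩
  rw [hasFiniteIntegral_iff_ofReal (ae_of_all _ (Z_nonneg hlam ha hb ht))]
  have h := setLIntegral_eq hlam ha hb hac hbc ham hbm hai hbi haM hbM le_rfl ht htT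
    (@MeasurableSet.univ Ω (ℱ 0))
  rw [Measure.restrict_univ] at h
  -- `Z 0 = a 0` is integrable.
  have h0 : Z lam a b 0 = a 0 := by ext ω; simp [Z]
  rw [h, h0, ← hasFiniteIntegral_iff_ofReal (ae_of_all _ fun ω => (ha 0 ω).le)]
  exact (hai 0).hasFiniteIntegral

lemma condExp_Z (hlam : 0 < lam) (ha : ∀ t ω, 0 < a t ω) (hb : ∀ t ω, 0 < b t ω)
    (hac : ∀ ω, Continuous fun t => a t ω) (hbc : ∀ ω, Continuous fun t => b t ω)
    (ham : ∀ t, Measurable[ℱ t] (a t)) (hbm : ∀ t, Measurable[ℱ t] (b t))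
    (hai : ∀ t, Integrable (a t) P) (hbi : ∀ t, Integrable (b t) P)
    (haM : ∀ s t : ℝ, 0 ≤ s → s ≤ t → t ≤ T → P[a t | ℱ s] =ᵐ[P] a s)
    (hbM : ∀ s t : ℝ, 0 ≤ s → s ≤ t → t ≤ T → P[b t | ℱ s] =ᵐ[P] b s)
    {u t : ℝ} (hu : 0 ≤ u) (hut : u ≤ t) (htT : t ≤ T) :
    P[Z lam a b t | ℱ u] =ᵐ[P] Z lam a b u := by
  have hi : ∀ {s}, 0 ≤ s → s ≤ T → Integrable (Z lam a b s) P :=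
    integrable_Z hlam ha hb hac hbc ham hbm hai hbi haM hbM
  have hit := hi (hu.trans hut) htT
  have hiu := hi hu (hut.trans htT)
  refine (ae_eq_condExp_of_forall_setIntegral_eq (ℱ.le u) hit
    (fun A _ _ => hiu.integrableOn) (fun A hA _ => ?_)
    (stronglyMeasurable_Z hb hac hbc ham hbm hu).aestronglyMeasurable).symm
  rw [integral_eq_lintegral_of_nonneg_ae (ae_of_all _ (Z_nonneg hlam ha hb hu))
      hiu.aestronglyMeasurable.restrict,
    integral_eq_lintegral_of_nonneg_ae (ae_of_all _ (Z_nonneg hlam ha hb (hu.trans hut)))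
      hit.aestronglyMeasurable.restrict,
    setLIntegral_eq hlam ha hb hac hbc ham hbm hai hbi haM hbM hu hut htT hA]

end SingleAlternative

/-- The assertion following (3.4) in the paper: the posterior expectation process
`N(t) = ∑_j p_j L_j(t) R_j(t) + e^{-λ t} L₀(t)` is a `(P⁰, 𝔉)`-martingale on `[0,T]`. -/
theorem posterior_expectation_is_martingale
    {Ω : Type*} {mΩ : MeasurableSpace Ω} (P0 : Measure Ω) [IsProbabilityMeasure P0]
    (T lam : ℝ) (hT : 0 < T) (hlam : 0 < lam)
    (ℱ : Filtration ℝ mΩ)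
    (m : ℕ) (hm : 0 < m)
    (L0 : ℝ → Ω → ℝ) (L : Fin m → ℝ → Ω → ℝ)
    (hL0_pos : ∀ t ω, 0 < L0 t ω) (hL_pos : ∀ j t ω, 0 < L j t ω)
    (hL0_cont : ∀ ω, Continuous (fun t => L0 t ω))
    (hL_cont : ∀ j ω, Continuous (fun t => L j t ω))
    (hL0_adapted : Adapted ℱ L0) (hL_adapted : ∀ j, Adapted ℱ (L j))
    (hL0_int : ∀ t, Integrable (L0 t) P0) (hL_int : ∀ j t, Integrable (L j t) P0)
    (hL0_mart : ∀ s t : ℝ, 0 ≤ s → s ≤ t → t ≤ T → P0[L0 t | ℱ s] =ᵐ[P0] L0 s)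
    (hL_mart : ∀ j, ∀ s t : ℝ, 0 ≤ s → s ≤ t → t ≤ T → P0[L j t | ℱ s] =ᵐ[P0] L j s)
    (hL0_sup_sq : Integrable (fun ω => ⨆ t : Icc (0 : ℝ) T, (L0 t ω) ^ 2) P0)
    (hL0_sup_inv_sq : Integrable (fun ω => ⨆ t : Icc (0 : ℝ) T, (L0 t ω) ^ (-2 : ℤ)) P0)
    (hL_sup_sq : ∀ j, Integrable (fun ω => ⨆ t : Icc (0 : ℝ) T, (L j t ω) ^ 2) P0)
    (hL_sup_inv_sq : ∀ j, Integrable (fun ω => ⨆ t : Icc (0 : ℝ) T, (L j t ω) ^ (-2 : ℤ)) P0)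
    (p : Fin m → ℝ) (hp_nonneg : ∀ j, 0 ≤ p j) (hp_sum : ∑ j, p j = 1)
    (R : Fin m → ℝ → Ω → ℝ)
    (hR : ∀ j t ω, R j t ω = ∫ s in (0 : ℝ)..t, (L0 s ω / L j s ω) * (lam * exp (-lam * s)))
    (N : ℝ → Ω → ℝ)
    (hN : ∀ t ω, N t ω = (∑ j, p j * L j t ω * R j t ω) + exp (-lam * t) * L0 t ω) :
    (∀ t ∈ Icc (0 : ℝ) T, StronglyMeasurable[ℱ t] (N t)) ∧
      (∀ t ∈ Icc (0 : ℝ) T, Integrable (N t) P0) ∧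
      (∀ s t : ℝ, 0 ≤ s → s ≤ t → t ≤ T → P0[N t | ℱ s] =ᵐ[P0] N s) := by
  have hNZ : ∀ t, N t = ∑ j, p j • Z lam L0 (L j) t := by
    intro t
    ext ω
    have h1 : exp (-lam * t) * L0 t ω = ∑ j, p j * (exp (-lam * t) * L0 t ω) := by
      rw [← Finset.sum_mul, hp_sum, one_mul]
    rw [hN, h1, ← Finset.sum_add_distrib, Finset.sum_apply]
    refine Finset.sum_congr rfl fun j _ => ?_
    simp only [Pi.smul_apply, smul_eq_mul, Z, hR]
    ring
  have hint : ∀ t, 0 ≤ t → t ≤ T → ∀ j, Integrable (p j • Z lam L0 (L j) t) P0 :=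
    fun t h0 h1 j => (integrable_Z hlam hL0_pos (hL_pos j) hL0_cont (hL_cont j) hL0_adapted
      (hL_adapted j) hL0_int (hL_int j) hL0_mart (hL_mart j) h0 h1).smul (p j)
  refine ⟨fun t ht => ?_, fun t ht => ?_, fun s t hs hst ht => ?_⟩
  · rw [hNZ]
    exact Finset.stronglyMeasurable_sum _ fun j _ =>
      (stronglyMeasurable_Z (hL_pos j) hL0_cont (hL_cont j) hL0_adapted (hL_adapted j)
        ht.1).const_smul (p j)
  · rw [hNZ]
    exact integrable_finsetSum' _ fun j _ => hint t ht.1 ht.2 j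
  · rw [hNZ, hNZ]
    refine (condExp_finsetSum (fun j _ => hint t (hs.trans hst) ht j) (ℱ s)).trans ?_
    have hj : ∀ j, P0[p j • Z lam L0 (L j) t | ℱ s] =ᵐ[P0] p j • Z lam L0 (L j) s := fun j =>
      (condExp_smul (p j) _ (ℱ s)).trans
        ((condExp_Z hlam hL0_pos (hL_pos j) hL0_cont (hL_cont j) hL0_adapted
          (hL_adapted j) hL0_int (hL_int j) hL0_mart (hL_mart j) hs hst ht).const_smul (p j))
    filter_upwards [ae_all_iff.2 hj] with ω hω
    simp only [Finset.sum_apply]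
    exact Finset.sum_congr rfl fun j _ => hω j
end
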